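/- arXiv:0708.3938 — 3 statements merged into one kernel-verified Lean document; each statement's English description precedes it below -/
import Mathlib

section
/- Let a¹ and a² be two fixed distinct directions in ℝⁿ and let X ⊂ ℝⁿ. If X has a cross section according to one of the directions a¹ or a², then the lengths of all irreducible paths in X (with respect to a¹ and a²) are uniformly bounded by some positive integer, and consequently R_b(X) is proximinal in B(X). -/
/-!
Call two points of `X` linked when `a1 ⬝ᵥ ·` or `a2 ⬝ᵥ ·` takes the same value at both. Points of
`X` joined by a chain of links are joined by a path with at most as many steps, since consecutive
steps in the same direction merge. If the cross section meets the fibres of `x` and `y` in `x'` and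
`y'`, then `x, x', y', y` is such a chain, so irreducible paths have at most four points.

For the approximation, suppose that irreducible paths have at most `N` points and that a sum of two
ridge functions is bounded by `C` on `X`. A link changes the first summand by at most `2 * C`, so
this summand varies by at most `N * (2 * C)` between joined points. Moving a constant from one
summand to the other on each class of joined points thus bounds both summands in terms of `N` and
`C` only. Therefore a best approximation need only be sought in a product of two boxes of
functions. This product is compact for pointwise convergence, and the uniform distance to `f`, being
a supremum of continuous functions, is lower semicontinuous on it, hence attains its minimum.
-/

open Matrix Set Filter Topology

/-- `p 0, p 1, ..., p (m-1)` is a (finite) path whose first difference is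
perpendicular to `a1`, with differences alternately perpendicular to `a1` and `a2`,
and all differences nonzero. -/
def IsPathFrom {n : ℕ} (a1 a2 : Fin n → ℝ) (m : ℕ) (p : ℕ → Fin n → ℝ) : Prop :=
  ∀ i, i + 1 < m →
    p (i + 1) - p i ≠ 0 ∧
    (i % 2 = 0 → a1 ⬝ᵥ (p (i + 1) - p i) = 0) ∧
    (i % 2 = 1 → a2 ⬝ᵥ (p (i + 1) - p i) = 0)

/-- A finite path with respect to the directions `a1` and `a2` (the alternation may
start with either direction). -/
def IsPath {n : ℕ} (a1 a2 : Fin n → ℝ) (m : ℕ) (p : ℕ → Fin n → ℝ) : Prop :=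
  IsPathFrom a1 a2 m p ∨ IsPathFrom a2 a1 m p

/-- A finite path of length `m` (i.e. with `m` points) all of whose points lie in `X`. -/
def IsPathIn {n : ℕ} (a1 a2 : Fin n → ℝ) (X : Set (Fin n → ℝ)) (m : ℕ)
    (p : ℕ → Fin n → ℝ) : Prop :=
  1 ≤ m ∧ IsPath a1 a2 m p ∧ ∀ i < m, p i ∈ X

/-- An irreducible path in `X`: no strictly shorter path in `X` joins its endpoints. -/
def IsIrreduciblePathIn {n : ℕ} (a1 a2 : Fin n → ℝ) (X : Set (Fin n → ℝ)) (m : ℕ)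
    (p : ℕ → Fin n → ℝ) : Prop :=
  IsPathIn a1 a2 X m p ∧
  ¬ ∃ l q, l < m ∧ IsPathIn a1 a2 X l q ∧ q 0 = p 0 ∧ q (l - 1) = p (m - 1)

/-- An infinite path whose first difference is perpendicular to `a1`. -/
def IsInfPathFrom {n : ℕ} (a1 a2 : Fin n → ℝ) (p : ℕ → Fin n → ℝ) : Prop :=
  ∀ i,
    p (i + 1) - p i ≠ 0 ∧
    (i % 2 = 0 → a1 ⬝ᵥ (p (i + 1) - p i) = 0) ∧
    (i % 2 = 1 → a2 ⬝ᵥ (p (i + 1) - p i) = 0)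

/-- An infinite path with respect to the directions `a1` and `a2`. -/
def IsInfPath {n : ℕ} (a1 a2 : Fin n → ℝ) (p : ℕ → Fin n → ℝ) : Prop :=
  IsInfPathFrom a1 a2 p ∨ IsInfPathFrom a2 a1 p

/-- `f` is bounded on `X`. -/
def BddOn {n : ℕ} (f : (Fin n → ℝ) → ℝ) (X : Set (Fin n → ℝ)) : Prop :=
  ∃ M, ∀ x ∈ X, |f x| ≤ M

/-- `R_a(X)`: sums of two ridge functions with directions `a1, a2` that are bounded on `X`
(the individual summands need not be bounded). -/
def RaSet {n : ℕ} (a1 a2 : Fin n → ℝ) (X : Set (Fin n → ℝ)) : Set ((Fin n → ℝ) → ℝ) :=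
  {f | (∃ g1 g2 : ℝ → ℝ, ∀ x ∈ X, f x = g1 (a1 ⬝ᵥ x) + g2 (a2 ⬝ᵥ x)) ∧ BddOn f X}

/-- `R_b(X)`: sums of two ridge functions with directions `a1, a2` whose summands are
bounded on `X`. -/
def RbSet {n : ℕ} (a1 a2 : Fin n → ℝ) (X : Set (Fin n → ℝ)) : Set ((Fin n → ℝ) → ℝ) :=
  {f | ∃ g1 g2 : ℝ → ℝ, (∀ x ∈ X, f x = g1 (a1 ⬝ᵥ x) + g2 (a2 ⬝ᵥ x)) ∧
    BddOn (fun x => g1 (a1 ⬝ᵥ x)) X ∧ BddOn (fun x => g2 (a2 ⬝ᵥ x)) X}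

/-- `R_c(X)`: sums of two ridge functions with directions `a1, a2` whose summands are
continuous on `X`. -/
def RcSet {n : ℕ} (a1 a2 : Fin n → ℝ) (X : Set (Fin n → ℝ)) : Set ((Fin n → ℝ) → ℝ) :=
  {f | ∃ g1 g2 : ℝ → ℝ, (∀ x ∈ X, f x = g1 (a1 ⬝ᵥ x) + g2 (a2 ⬝ᵥ x)) ∧
    ContinuousOn (fun x => g1 (a1 ⬝ᵥ x)) X ∧ ContinuousOn (fun x => g2 (a2 ⬝ᵥ x)) X}

/-- The uniform (sup) distance of `f` and `g` over `X`. -/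
noncomputable def supDist {n : ℕ} (X : Set (Fin n → ℝ)) (f g : (Fin n → ℝ) → ℝ) : ℝ :=
  sSup {r | ∃ x ∈ X, r = |f x - g x|}

/-- `f` has an extremal element (best approximation in the sup norm over `X`) in `S`. -/
def HasExtremalIn {n : ℕ} (X : Set (Fin n → ℝ)) (f : (Fin n → ℝ) → ℝ)
    (S : Set ((Fin n → ℝ) → ℝ)) : Prop :=
  ∃ g0 ∈ S, supDist X f g0 = sInf ((supDist X f) '' S)

/-- The orbit of `t`: all points of `X` joined to `t` by a common path lying in `X`. -/
def Orbit {n : ℕ} (a1 a2 : Fin n → ℝ) (X : Set (Fin n → ℝ)) (t : Fin n → ℝ) :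
    Set (Fin n → ℝ) :=
  {y | ∃ m p, IsPathIn a1 a2 X m p ∧ (∃ i < m, p i = t) ∧ (∃ j < m, p j = y)}

/-- The variation of `f` on a set `Y`. -/
noncomputable def varOn {n : ℕ} (f : (Fin n → ℝ) → ℝ) (Y : Set (Fin n → ℝ)) : ℝ :=
  sSup {r | ∃ x ∈ Y, ∃ y ∈ Y, r = |f x - f y|}

section BoundedSplitting

variable {ι β γ : Type*} {u : ι → β} {v : ι → γ}

/-- Bounded sums `g₁ ∘ u + g₂ ∘ v` can be rewritten with bounded summands, the bound on the summands
depending only on the bound on the sum. This is what makes a compactness argument for best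
approximation by such sums possible. The new summands are bounded on all of `β` and
`γ`, not only on the ranges of `u` and `v`, so that they range over compact boxes. -/
def HasBoundedSplitting (u : ι → β) (v : ι → γ) : Prop :=
  ∀ C ≥ 0, ∃ B : ℝ, ∀ (g₁ : β → ℝ) (g₂ : γ → ℝ), (∀ x, |g₁ (u x) + g₂ (v x)| ≤ C) →
    ∃ (h₁ : β → ℝ) (h₂ : γ → ℝ), (∀ s, |h₁ s| ≤ B) ∧ (∀ t, |h₂ t| ≤ B) ∧
      ∀ x, h₁ (u x) + h₂ (v x) = g₁ (u x) + g₂ (v x)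

theorem abs_extend_zero_le {w : ι → ℝ} {B : ℝ} (u : ι → β) (hB : 0 ≤ B) (hw : ∀ x, |w x| ≤ B)
    (s : β) : |Function.extend u w 0 s| ≤ B := by
  classical
  rw [Function.extend_def]
  split_ifs with h
  · exact hw _
  · simpa using hB

theorem exists_bounded_splitting_of_factorsThrough {r : ι → ℝ} (hru : r.FactorsThrough u)
    (hrv : r.FactorsThrough v) {g₁ : β → ℝ} {g₂ : γ → ℝ} {B : ℝ} (hB : 0 ≤ B)
    (hg₁ : ∀ x, |g₁ (u x) - r x| ≤ B) (hg₂ : ∀ x, |g₂ (v x) + r x| ≤ B) :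
    ∃ (h₁ : β → ℝ) (h₂ : γ → ℝ), (∀ s, |h₁ s| ≤ B) ∧ (∀ t, |h₂ t| ≤ B) ∧
      ∀ x, h₁ (u x) + h₂ (v x) = g₁ (u x) + g₂ (v x) := by
  have hu : (fun x => g₁ (u x) - r x).FactorsThrough u := fun x y h => by simp only [h, hru h]
  have hv : (fun x => g₂ (v x) + r x).FactorsThrough v := fun x y h => by simp only [h, hrv h]
  refine ⟨_, _, abs_extend_zero_le u hB hg₁, abs_extend_zero_le v hB hg₂, fun x => ?_⟩
  rw [hu.extend_apply, hv.extend_apply]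
  ring

theorem bddAbove_range_abs_sub {f g : ι → ℝ} {M M' : ℝ} (hf : ∀ x, |f x| ≤ M)
    (hg : ∀ x, |g x| ≤ M') : BddAbove (range fun x => |f x - g x|) :=
  ⟨M + M', forall_mem_range.2 fun x => (abs_sub _ _).trans (add_le_add (hf x) (hg x))⟩

theorem exists_bounded_sum_iSup_abs_sub_le {f : ι → ℝ} {M B : ℝ} (hf : ∀ x, |f x| ≤ M)
    (hB : 0 ≤ B) (u : ι → β) (v : ι → γ) :
    ∃ (h₁ : β → ℝ) (h₂ : γ → ℝ), (∀ s, |h₁ s| ≤ B) ∧ (∀ t, |h₂ t| ≤ B) ∧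
      ∀ (g₁ : β → ℝ) (g₂ : γ → ℝ), (∀ s, |g₁ s| ≤ B) → (∀ t, |g₂ t| ≤ B) →
        ⨆ x, |f x - (h₁ (u x) + h₂ (v x))| ≤ ⨆ x, |f x - (g₁ (u x) + g₂ (v x))| := by
  let K : Set ((β → ℝ) × (γ → ℝ)) :=
    (univ.pi fun _ => Icc (-B) B) ×ˢ (univ.pi fun _ => Icc (-B) B)
  have mem_K (g) : g ∈ K ↔ (∀ s, |g.1 s| ≤ B) ∧ ∀ t, |g.2 t| ≤ B := by
    simp only [K, mem_prod, mem_univ_pi, mem_Icc, abs_le]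
  have hK : IsCompact K :=
    (isCompact_univ_pi fun _ => isCompact_Icc).prod (isCompact_univ_pi fun _ => isCompact_Icc)
  have hK₀ : K.Nonempty := ⟨0, (mem_K 0).2 (by simpa using ⟨fun _ => hB, fun _ => hB⟩)⟩
  have hlsc : LowerSemicontinuousOn (fun g => ⨆ x, |f x - (g.1 (u x) + g.2 (v x))|) K := by
    refine lowerSemicontinuousOn_ciSup (fun g hg => ?_) fun x => ?_
    · obtain ⟨h₁, h₂⟩ := (mem_K g).1 hg
      exact bddAbove_range_abs_sub hf fun x =>
        (abs_add_le _ _).trans (add_le_add (h₁ (u x)) (h₂ (v x)))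
    · exact (by fun_prop : Continuous fun g : (β → ℝ) × (γ → ℝ) =>
        |f x - (g.1 (u x) + g.2 (v x))|).lowerSemicontinuous.lowerSemicontinuousOn K
  obtain ⟨h, hh, hmin⟩ := hlsc.exists_isMinOn hK₀ hK
  obtain ⟨h₁, h₂⟩ := (mem_K h).1 hh
  exact ⟨h.1, h.2, h₁, h₂, fun g₁ g₂ hg₁ hg₂ => hmin ((mem_K (g₁, g₂)).2 ⟨hg₁, hg₂⟩)⟩

theorem HasBoundedSplitting.exists_iSup_abs_sub_le (h : HasBoundedSplitting u v) {f : ι → ℝ}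
    {M : ℝ} (hM : 0 ≤ M) (hf : ∀ x, |f x| ≤ M) :
    ∃ (B : ℝ) (h₁ : β → ℝ) (h₂ : γ → ℝ), (∀ s, |h₁ s| ≤ B) ∧ (∀ t, |h₂ t| ≤ B) ∧
      ∀ (g₁ : β → ℝ) (g₂ : γ → ℝ) (M' : ℝ), (∀ x, |g₁ (u x) + g₂ (v x)| ≤ M') →
        ⨆ x, |f x - (h₁ (u x) + h₂ (v x))| ≤ ⨆ x, |f x - (g₁ (u x) + g₂ (v x))| := by
  obtain ⟨B, hB⟩ := h (2 * M) (by positivity)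
  obtain ⟨h₁, h₂, hh₁, hh₂, hmin⟩ :=
    exists_bounded_sum_iSup_abs_sub_le hf (le_max_right B 0) u v
  refine ⟨max B 0, h₁, h₂, hh₁, hh₂, fun g₁ g₂ M' hg => ?_⟩
  -- A sum at distance more than `M` from `f` is no better than the zero sum.
  rcases lt_or_ge M (⨆ x, |f x - (g₁ (u x) + g₂ (v x))|) with hlt | hle
  · calc ⨆ x, |f x - (h₁ (u x) + h₂ (v x))| ≤ ⨆ x, |f x - (0 + 0)| :=
          hmin (fun _ => 0) (fun _ => 0) (by simp) (by simp)
      _ ≤ M := Real.iSup_le (by simpa using hf) hM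
      _ ≤ _ := hlt.le
  · have hsum : ∀ x, |g₁ (u x) + g₂ (v x)| ≤ 2 * M := fun x => by
      have hdist := (le_ciSup (bddAbove_range_abs_sub hf hg) x).trans hle
      linarith [abs_sub_abs_le_abs_sub (g₁ (u x) + g₂ (v x)) (f x),
        abs_sub_comm (f x) (g₁ (u x) + g₂ (v x)), hf x]
    obtain ⟨k₁, k₂, hk₁, hk₂, hk⟩ := hB g₁ g₂ hsum
    simpa only [hk] using hmin k₁ k₂ (fun s => (hk₁ s).trans (le_max_left B 0))
      fun t => (hk₂ t).trans (le_max_left B 0)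

end BoundedSplitting

section Proximinality

variable {n : ℕ} {a1 a2 : Fin n → ℝ} {X : Set (Fin n → ℝ)} {f : (Fin n → ℝ) → ℝ}

theorem supDist_eq_iSup (X : Set (Fin n → ℝ)) (f g : (Fin n → ℝ) → ℝ) :
    supDist X f g = ⨆ x : X, |f x - g x| := by
  refine congrArg sSup (Set.ext fun r => ?_)
  simp only [mem_ofPred_eq, mem_range, Subtype.exists, exists_prop, eq_comm]

theorem hasExtremalIn_of_forall_supDist_le {S : Set ((Fin n → ℝ) → ℝ)} {g₀ : (Fin n → ℝ) → ℝ}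
    (hg₀ : g₀ ∈ S) (hmin : ∀ g ∈ S, supDist X f g₀ ≤ supDist X f g) : HasExtremalIn X f S :=
  have hleast : IsLeast (supDist X f '' S) (supDist X f g₀) :=
    ⟨mem_image_of_mem _ hg₀, forall_mem_image.2 hmin⟩
  ⟨g₀, hg₀, hleast.csInf_eq.symm⟩

theorem HasBoundedSplitting.hasExtremalIn_RbSet
    (h : HasBoundedSplitting (fun x : X => a1 ⬝ᵥ (x : Fin n → ℝ))
      (fun x : X => a2 ⬝ᵥ (x : Fin n → ℝ)))
    (hf : BddOn f X) : HasExtremalIn X f (RbSet a1 a2 X) := by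
  obtain ⟨M, hM⟩ := hf
  obtain ⟨B, h₁, h₂, hh₁, hh₂, hmin⟩ := h.exists_iSup_abs_sub_le (abs_nonneg M)
    (f := fun x : X => f x) fun x => (hM x x.2).trans (le_abs_self M)
  refine hasExtremalIn_of_forall_supDist_le (g₀ := fun x => h₁ (a1 ⬝ᵥ x) + h₂ (a2 ⬝ᵥ x))
    ⟨h₁, h₂, fun _ _ => rfl, ⟨B, fun _ _ => hh₁ _⟩, ⟨B, fun _ _ => hh₂ _⟩⟩ ?_
  rintro g ⟨g₁, g₂, hg, ⟨M₁, hM₁⟩, ⟨M₂, hM₂⟩⟩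
  simp only [supDist_eq_iSup, hg _ (Subtype.coe_prop _)]
  exact hmin g₁ g₂ (M₁ + M₂) fun x =>
    (abs_add_le _ _).trans (add_le_add (hM₁ x x.2) (hM₂ x x.2))

end Proximinality

section Paths

variable {n : ℕ} {a1 a2 : Fin n → ℝ} {X : Set (Fin n → ℝ)} {x y z : Fin n → ℝ} {k m : ℕ}
  {p : ℕ → Fin n → ℝ}

/-- Two points are linked when their difference, possibly zero, is perpendicular to one of the
directions. -/
def Linked (a1 a2 x y : Fin n → ℝ) : Prop :=
  a1 ⬝ᵥ x = a1 ⬝ᵥ y ∨ a2 ⬝ᵥ x = a2 ⬝ᵥ y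

theorem Linked.symm (h : Linked a1 a2 x y) : Linked a1 a2 y x :=
  h.imp Eq.symm Eq.symm

theorem Linked.swap (h : Linked a2 a1 x y) : Linked a1 a2 x y :=
  Or.symm h

/-- The endpoint relation of paths in `X` with `k` steps, hence `k + 1` points, whose first step is
perpendicular to `a1`. The recursive form makes adding and removing first points immediate. -/
inductive PathRel (X : Set (Fin n → ℝ)) :
    (Fin n → ℝ) → (Fin n → ℝ) → ℕ → (Fin n → ℝ) → (Fin n → ℝ) → Prop
  | refl {b c x : Fin n → ℝ} (hx : x ∈ X) : PathRel X b c 0 x x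
  | cons {b c x y z : Fin n → ℝ} {k : ℕ} (hx : x ∈ X) (hne : x ≠ y) (hperp : b ⬝ᵥ x = b ⬝ᵥ y)
      (h : PathRel X c b k y z) : PathRel X b c (k + 1) x z

/-- The endpoint relation of paths in `X` with at most `k` steps, starting in either direction. -/
def JoinedWithin (a1 a2 : Fin n → ℝ) (X : Set (Fin n → ℝ)) (k : ℕ) (x y : Fin n → ℝ) : Prop :=
  ∃ j ≤ k, PathRel X a1 a2 j x y ∨ PathRel X a2 a1 j x y

theorem JoinedWithin.swap (h : JoinedWithin a2 a1 X k x y) : JoinedWithin a1 a2 X k x y :=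
  let ⟨j, hj, hpath⟩ := h
  ⟨j, hj, hpath.symm⟩

theorem joinedWithin_refl (hx : x ∈ X) : JoinedWithin a1 a2 X 0 x x :=
  ⟨0, le_rfl, .inl (.refl hx)⟩

theorem PathRel.joinedWithin_cons (h : PathRel X a1 a2 k y z) (hx : x ∈ X)
    (hxy : Linked a1 a2 x y) : JoinedWithin a1 a2 X (k + 1) x z := by
  by_cases hne : x = y
  · exact ⟨k, k.le_succ, .inl (hne ▸ h)⟩
  rcases hxy with h₁ | h₂
  · cases h with
    | refl hy => exact ⟨1, le_rfl, .inl (.cons hx hne h₁ (.refl hy))⟩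
    | @cons _ _ _ y₂ _ j _ _ hperp htail =>
      -- Both steps are perpendicular to `a1`, so `y` can be skipped.
      by_cases hne₂ : x = y₂
      · exact ⟨j, by omega, .inr (hne₂ ▸ htail)⟩
      · exact ⟨j + 1, by omega, .inl (.cons hx hne₂ (h₁.trans hperp) htail)⟩
  · exact ⟨k + 1, le_rfl, .inr (.cons hx hne h₂ h)⟩

theorem JoinedWithin.cons (h : JoinedWithin a1 a2 X k y z) (hx : x ∈ X)
    (hxy : Linked a1 a2 x y) : JoinedWithin a1 a2 X (k + 1) x z := by
  obtain ⟨j, hj, h₁ | h₂⟩ := h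
  · obtain ⟨i, hi, h⟩ := h₁.joinedWithin_cons hx hxy
    exact ⟨i, by omega, h⟩
  · obtain ⟨i, hi, h⟩ := (h₂.joinedWithin_cons hx hxy.swap).swap
    exact ⟨i, by omega, h⟩

theorem isPathFrom_add_two_iff : IsPathFrom a1 a2 (m + 2) p ↔
    p 0 ≠ p 1 ∧ a1 ⬝ᵥ p 0 = a1 ⬝ᵥ p 1 ∧ IsPathFrom a2 a1 (m + 1) fun i => p (i + 1) := by
  constructor
  · intro h
    obtain ⟨hne, hperp, -⟩ := h 0 (by omega)
    refine ⟨(sub_ne_zero.1 hne).symm, ?_, fun i hi => ?_⟩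
    · exact (sub_eq_zero.1 ((dotProduct_sub _ _ _).symm.trans (hperp rfl))).symm
    · obtain ⟨hne', heven, hodd⟩ := h (i + 1) (by omega)
      exact ⟨hne', fun hi₀ => hodd (by omega), fun hi₁ => heven (by omega)⟩
  · rintro ⟨hne, hperp, h⟩ (_ | i) hi
    · exact ⟨sub_ne_zero.2 hne.symm, fun _ => by simp [dotProduct_sub, hperp], by simp⟩
    · obtain ⟨hne', heven, hodd⟩ := h i (by omega)
      exact ⟨hne', fun hi₀ => hodd (by omega), fun hi₁ => heven (by omega)⟩

theorem PathRel.exists_isPathFrom (h : PathRel X a1 a2 k x y) :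
    ∃ p, IsPathFrom a1 a2 (k + 1) p ∧ (∀ i < k + 1, p i ∈ X) ∧ p 0 = x ∧ p k = y := by
  induction h with
  | @refl _ _ x hx => exact ⟨fun _ => x, fun i hi => by omega, fun _ _ => hx, rfl, rfl⟩
  | @cons _ _ x _ _ _ hx hne hperp _ ih =>
    obtain ⟨p, hp, hpX, rfl, rfl⟩ := ih
    refine ⟨fun | 0 => x | i + 1 => p i, isPathFrom_add_two_iff.2 ⟨hne, hperp, hp⟩, ?_, rfl, rfl⟩
    rintro (_ | i) hi
    · exact hx
    · exact hpX i (by omega)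

theorem JoinedWithin.exists_isPathIn (h : JoinedWithin a1 a2 X k x y) :
    ∃ m p, m ≤ k + 1 ∧ IsPathIn a1 a2 X m p ∧ p 0 = x ∧ p (m - 1) = y := by
  obtain ⟨j, hj, h | h⟩ := h <;> obtain ⟨p, hp, hpX, hx, hy⟩ := h.exists_isPathFrom
  · exact ⟨j + 1, p, by omega, ⟨by omega, .inl hp, hpX⟩, hx, hy⟩
  · exact ⟨j + 1, p, by omega, ⟨by omega, .inr hp, hpX⟩, hx, hy⟩

theorem JoinedWithin.exists_isIrreduciblePathIn (h : JoinedWithin a1 a2 X k x y) :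
    ∃ m p, IsIrreduciblePathIn a1 a2 X m p ∧ p 0 = x ∧ p (m - 1) = y := by
  classical
  have hex : ∃ m p, IsPathIn a1 a2 X m p ∧ p 0 = x ∧ p (m - 1) = y :=
    let ⟨m, p, _, hp⟩ := h.exists_isPathIn
    ⟨m, p, hp⟩
  obtain ⟨p, hp, rfl, hy⟩ := Nat.find_spec hex
  refine ⟨Nat.find hex, p, ⟨hp, ?_⟩, rfl, hy⟩
  rintro ⟨l, q, hl, hq, hq₀, hq₁⟩
  exact Nat.find_min hex hl ⟨q, hq, hq₀, hq₁.trans hy⟩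

theorem IsIrreduciblePathIn.length_le (hp : IsIrreduciblePathIn a1 a2 X m p)
    (h : JoinedWithin a1 a2 X k (p 0) (p (m - 1))) : m ≤ k + 1 := by
  by_contra! hlt
  obtain ⟨l, q, hl, hq⟩ := h.exists_isPathIn
  exact hp.2 ⟨l, q, hl.trans_lt hlt, hq⟩

theorem IsPathFrom.linked_succ (hp : IsPathFrom a1 a2 m p) {i : ℕ} (hi : i + 1 < m) :
    Linked a1 a2 (p i) (p (i + 1)) := by
  obtain ⟨-, heven, hodd⟩ := hp i hi
  simp only [dotProduct_sub, sub_eq_zero] at heven hodd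
  exact i.mod_two_eq_zero_or_one.imp (fun h => (heven h).symm) fun h => (hodd h).symm

theorem IsPathIn.linked_succ (hp : IsPathIn a1 a2 X m p) {i : ℕ} (hi : i + 1 < m) :
    Linked a1 a2 (p i) (p (i + 1)) :=
  hp.2.1.elim (fun h => h.linked_succ hi) fun h => (h.linked_succ hi).swap

theorem IsPathIn.dist_le {E : Type*} [PseudoMetricSpace E] {w : (Fin n → ℝ) → E} {D : ℝ}
    (hp : IsPathIn a1 a2 X m p)
    (hw : ∀ x ∈ X, ∀ y ∈ X, Linked a1 a2 x y → dist (w x) (w y) ≤ D) :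
    dist (w (p 0)) (w (p (m - 1))) ≤ (m - 1 : ℕ) * D := by
  have hstep : ∀ {i}, i < m - 1 → dist (w (p i)) (w (p (i + 1))) ≤ D := fun {i} hi =>
    hw _ (hp.2.2 i (by omega)) _ (hp.2.2 (i + 1) (by omega)) (hp.linked_succ (by omega))
  simpa using dist_le_range_sum_of_dist_le (f := fun i => w (p i)) (m - 1) hstep

end Paths

section CrossSection

variable {n : ℕ} {a1 a2 : Fin n → ℝ} {X : Set (Fin n → ℝ)}

/-- The hyperplane section `{x ∈ X | a1 ⬝ᵥ x = c}` is, for some `c`, a cross section of `X`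
according to `a1`: every fibre of `a2 ⬝ᵥ ·` in `X` meets it. -/
def HasCrossSection (a1 a2 : Fin n → ℝ) (X : Set (Fin n → ℝ)) : Prop :=
  ∃ c : ℝ, ∀ y ∈ X, ∃ y1 ∈ X, a1 ⬝ᵥ y1 = c ∧ a2 ⬝ᵥ y = a2 ⬝ᵥ y1

theorem HasCrossSection.joinedWithin_three (h : HasCrossSection a1 a2 X) {x y : Fin n → ℝ}
    (hx : x ∈ X) (hy : y ∈ X) : JoinedWithin a1 a2 X 3 x y := by
  obtain ⟨c, hc⟩ := h
  obtain ⟨x', hx', hx'c, hxx'⟩ := hc x hx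
  obtain ⟨y', hy', hy'c, hyy'⟩ := hc y hy
  exact (((joinedWithin_refl hy).cons hy' (.inr hyy'.symm)).cons hx'
    (.inl (hx'c.trans hy'c.symm))).cons hx (.inr hxx')

theorem IsIrreduciblePathIn.length_le_four {m : ℕ} {p : ℕ → Fin n → ℝ}
    (hp : IsIrreduciblePathIn a1 a2 X m p)
    (h : HasCrossSection a1 a2 X ∨ HasCrossSection a2 a1 X) : m ≤ 4 := by
  have ⟨⟨hm, _, hpX⟩, _⟩ := hp
  have hx : p 0 ∈ X := hpX 0 hm
  have hy : p (m - 1) ∈ X := hpX (m - 1) (by omega)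
  rcases h with h | h
  · exact hp.length_le (h.joinedWithin_three hx hy)
  · exact hp.length_le (h.joinedWithin_three hx hy).swap

end CrossSection

section BoundedLength

variable {n : ℕ} {a1 a2 : Fin n → ℝ} {X : Set (Fin n → ℝ)}

theorem exists_base_point (a1 a2 : Fin n → ℝ) (X : Set (Fin n → ℝ)) :
    ∃ b : X → X, (∀ x : X, ∃ k, JoinedWithin a1 a2 X k x (b x)) ∧
      ∀ x y : X, Linked a1 a2 x y → b x = b y := by
  let q : X → Quot fun x y : X => Linked a1 a2 x y := Quot.mk _
  refine ⟨fun x => (q x).out, fun x => ?_, fun _ _ h => congrArg Quot.out (Quot.sound h)⟩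
  let joined (x : X) : Set X := {z | ∃ k, JoinedWithin a1 a2 X k x z}
  have joined_subset (x y : X) (h : Linked a1 a2 x y) : joined y ⊆ joined x :=
    fun _ ⟨k, hk⟩ => ⟨k + 1, hk.cons x.2 h⟩
  have joined_eq (x y : X) (h : Linked a1 a2 x y) : joined x = joined y :=
    (joined_subset y x h.symm).antisymm (joined_subset x y h)
  have joined_out : joined (q x).out = joined x :=
    congrArg (Quot.lift joined joined_eq) (Quot.out_eq (q x))
  exact joined_out.subset ⟨0, joinedWithin_refl (q x).out.2⟩

theorem JoinedWithin.dist_le_of_irreducible_length_le {E : Type*} [PseudoMetricSpace E]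
    {w : (Fin n → ℝ) → E} {N k : ℕ} {D : ℝ} {x y : Fin n → ℝ} (h : JoinedWithin a1 a2 X k x y)
    (hN : ∀ m p, IsIrreduciblePathIn a1 a2 X m p → m ≤ N)
    (hw : ∀ x ∈ X, ∀ y ∈ X, Linked a1 a2 x y → dist (w x) (w y) ≤ D) :
    dist (w x) (w y) ≤ N * D := by
  obtain ⟨m, p, hp, rfl, rfl⟩ := h.exists_isIrreduciblePathIn
  have hp₀ : p 0 ∈ X := hp.1.2.2 0 hp.1.1
  have hD : 0 ≤ D := dist_nonneg.trans (hw _ hp₀ _ hp₀ (.inl rfl))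
  have hm : m - 1 ≤ N := (m.sub_le 1).trans (hN m p hp)
  exact (hp.1.dist_le hw).trans (by gcongr)

theorem Linked.abs_sub_le {g₁ g₂ : ℝ → ℝ} {C : ℝ} {x y : Fin n → ℝ} (h : Linked a1 a2 x y)
    (hx : |g₁ (a1 ⬝ᵥ x) + g₂ (a2 ⬝ᵥ x)| ≤ C) (hy : |g₁ (a1 ⬝ᵥ y) + g₂ (a2 ⬝ᵥ y)| ≤ C) :
    |g₁ (a1 ⬝ᵥ x) - g₁ (a1 ⬝ᵥ y)| ≤ 2 * C := by
  rcases h with h | h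
  · have hC : 0 ≤ C := (abs_nonneg _).trans hx
    simpa [h] using hC
  · rw [h] at hx
    simpa [two_mul] using (abs_sub _ _).trans (add_le_add hx hy)

theorem hasBoundedSplitting_of_irreducible_length_le {N : ℕ}
    (hN : ∀ m p, IsIrreduciblePathIn a1 a2 X m p → m ≤ N) :
    HasBoundedSplitting (fun x : X => a1 ⬝ᵥ (x : Fin n → ℝ))
      (fun x : X => a2 ⬝ᵥ (x : Fin n → ℝ)) := by
  intro C hC
  obtain ⟨b, hjoined, hb⟩ := exists_base_point a1 a2 X
  refine ⟨N * (2 * C) + C, fun g₁ g₂ hg => ?_⟩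
  have hvar (x : X) : |g₁ (a1 ⬝ᵥ x) - g₁ (a1 ⬝ᵥ b x)| ≤ N * (2 * C) := by
    obtain ⟨k, hk⟩ := hjoined x
    exact hk.dist_le_of_irreducible_length_le (w := fun x => g₁ (a1 ⬝ᵥ x)) hN
      fun x hx y hy hxy => hxy.abs_sub_le (hg ⟨x, hx⟩) (hg ⟨y, hy⟩)
  refine exists_bounded_splitting_of_factorsThrough (r := fun x => g₁ (a1 ⬝ᵥ b x))
    (fun x y h => by simp only [hb x y (.inl h)]) (fun x y h => by simp only [hb x y (.inr h)])
    (by positivity) (fun x => (hvar x).trans (by linarith)) fun x => ?_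
  calc |g₂ (a2 ⬝ᵥ x) + g₁ (a1 ⬝ᵥ b x)|
      = |(g₁ (a1 ⬝ᵥ x) + g₂ (a2 ⬝ᵥ x)) - (g₁ (a1 ⬝ᵥ x) - g₁ (a1 ⬝ᵥ b x))| := by ring_nf
    _ ≤ C + N * (2 * C) := (abs_sub _ _).trans (add_le_add (hg x) (hvar x))
    _ = N * (2 * C) + C := add_comm _ _

theorem hasExtremalIn_RbSet_of_irreducible_length_le {N : ℕ}
    (hN : ∀ m p, IsIrreduciblePathIn a1 a2 X m p → m ≤ N) {f : (Fin n → ℝ) → ℝ}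
    (hf : BddOn f X) : HasExtremalIn X f (RbSet a1 a2 X) :=
  (hasBoundedSplitting_of_irreducible_length_le hN).hasExtremalIn_RbSet hf

end BoundedLength

/-- if `X` has a cross section according to one of the directions
`a1` or `a2`, then the lengths of all irreducible paths in `X` are uniformly bounded
by some positive integer, and consequently `R_b(X)` is proximinal in `B(X)`. -/
theorem proximinality_of_Rb_of_cross_section
    {n : ℕ} (a1 a2 : Fin n → ℝ) (ha1 : a1 ≠ 0) (ha2 : a2 ≠ 0) (hne : a1 ≠ a2)
    (X : Set (Fin n → ℝ))
    (hcross :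
      (∃ c : ℝ, ∀ y ∈ X, ∃ y1 ∈ X, a1 ⬝ᵥ y1 = c ∧ a2 ⬝ᵥ y = a2 ⬝ᵥ y1) ∨
      (∃ c : ℝ, ∀ y ∈ X, ∃ y1 ∈ X, a2 ⬝ᵥ y1 = c ∧ a1 ⬝ᵥ y = a1 ⬝ᵥ y1)) :
    (∃ N : ℕ, 0 < N ∧ ∀ m p, IsIrreduciblePathIn a1 a2 X m p → m ≤ N) ∧
    (∀ f : (Fin n → ℝ) → ℝ, BddOn f X → HasExtremalIn X f (RbSet a1 a2 X)) := by
  have hlen : ∀ m p, IsIrreduciblePathIn a1 a2 X m p → m ≤ 4 := fun _ _ hp =>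
    hp.length_le_four hcross
  exact ⟨⟨4, by norm_num, hlen⟩, fun _ => hasExtremalIn_RbSet_of_irreducible_length_le hlen⟩
end

section
/- Let a¹ = (1, −1), a² = (1, 1) in ℝ², let X = {x⁰, x¹, x², ...} ⊂ ℝ² where x⁰ = (2, 2/3), x¹ = (2/3, −2/3), x² = (0, 0), and x^{3+k} = (Σ_{j=0}^{k} 2^{−j}, Σ_{j=0}^{k} (−1)^j 2^{−j}) for k = 0, 1, 2, .... Let (cₙ)_{n≥1} be a sequence with cₙ > 0, cₙ → 0 and Σ_{n=1}^∞ cₙ = ∞, and let f₀ : X → ℝ be defined by f₀(x^{2n}) = 0 and f₀(x^{2n+1}) = c_{n+1} for n = 0, 1, 2, .... Then there do not exist functions g₁, g₂ : ℝ → ℝ with f₀(x) = g₁(a¹·x) + g₂(a²·x) for all x ∈ X such that both summands g₁(a¹·x) and g₂(a²·x) are bounded on X; in particular, f₀ ∉ R_b(X). -/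
open Matrix Set Filter Topology

/-- The sequence of points `x⁰, x¹, x², …` of the example:
`x⁰ = (2, 2/3)`, `x¹ = (2/3, −2/3)`, `x² = (0,0)` and
`x^{3+k} = (∑_{j=0}^k 2^{−j}, ∑_{j=0}^k (−1)^j 2^{−j})`. -/
noncomputable def xseq : ℕ → (Fin 2 → ℝ)
  | 0 => ![2, 2 / 3]
  | 1 => ![2 / 3, -(2 / 3)]
  | 2 => ![0, 0]
  | (k + 3) => ![∑ j ∈ Finset.range (k + 1), (1 / 2 : ℝ) ^ j,
                 ∑ j ∈ Finset.range (k + 1), (-(1 / 2) : ℝ) ^ j]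

/-! If `f = g₁ ∘ u + g₂ ∘ v` and the points `p 0, p 1, p 2, …` have alternately equal values of
`u` and of `v`, the increments `f (p (2m+1)) - f (p (2m))` telescope to
`g₂ (v (p (2n))) - g₂ (v (p 0))`. Along the path `xseq` the increments of `f0` are the `c (m + 1)`,
whose partial sums are unbounded, so the second summand is unbounded already at the even points;
there `f0 = 0`, so the first summand is its negative. -/

section AlternatingPath

variable {α β γ : Type*} {u : α → β} {v : α → γ} {p : ℕ → α}

theorem sum_range_odd_sub_even {G : Type*} [AddCommGroup G] {f : α → G} {g₁ : β → G} {g₂ : γ → G}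
    (hu : ∀ m, u (p (2 * m + 1)) = u (p (2 * m)))
    (hv : ∀ m, v (p (2 * m + 2)) = v (p (2 * m + 1)))
    (hf : ∀ i, f (p i) = g₁ (u (p i)) + g₂ (v (p i))) (n : ℕ) :
    ∑ m ∈ Finset.range n, (f (p (2 * m + 1)) - f (p (2 * m))) =
      g₂ (v (p (2 * n))) - g₂ (v (p 0)) := by
  have increment (m : ℕ) : f (p (2 * m + 1)) - f (p (2 * m)) =
      g₂ (v (p (2 * (m + 1)))) - g₂ (v (p (2 * m))) := by
    rw [hf, hf, hu, mul_add_one, hv, add_sub_add_left_eq_sub]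
  simp only [increment]
  exact Finset.sum_range_sub (fun m => g₂ (v (p (2 * m)))) n

theorem summable_odd_sub_even_of_abs_le {f : α → ℝ} {g₁ : β → ℝ} {g₂ : γ → ℝ} {M : ℝ}
    (hu : ∀ m, u (p (2 * m + 1)) = u (p (2 * m)))
    (hv : ∀ m, v (p (2 * m + 2)) = v (p (2 * m + 1)))
    (hf : ∀ i, f (p i) = g₁ (u (p i)) + g₂ (v (p i)))
    (hle : ∀ m, f (p (2 * m)) ≤ f (p (2 * m + 1)))
    (hM : ∀ m, |g₂ (v (p (2 * m)))| ≤ M) :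
    Summable fun m => f (p (2 * m + 1)) - f (p (2 * m)) := by
  refine summable_of_sum_range_le (c := M + M) (fun m => sub_nonneg.2 (hle m)) fun n => ?_
  calc ∑ m ∈ Finset.range n, (f (p (2 * m + 1)) - f (p (2 * m)))
      = g₂ (v (p (2 * n))) - g₂ (v (p 0)) := sum_range_odd_sub_even hu hv hf n
    _ ≤ |g₂ (v (p (2 * n)))| + |g₂ (v (p 0))| := (le_abs_self _).trans (abs_sub _ _)
    _ ≤ M + M := add_le_add (hM n) (hM 0)

end AlternatingPath

theorem xseq_add_two (k : ℕ) :
    xseq (k + 2) = ![∑ j ∈ Finset.range k, (1 / 2 : ℝ) ^ j,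
      ∑ j ∈ Finset.range k, (-(1 / 2) : ℝ) ^ j] := by
  cases k <;> simp [xseq]

theorem xseq_add_three (k : ℕ) :
    xseq (k + 3) = xseq (k + 2) + ![(1 / 2 : ℝ) ^ k, (-(1 / 2) : ℝ) ^ k] := by
  rw [show k + 3 = k + 1 + 2 from rfl, xseq_add_two, xseq_add_two]
  simp [Finset.sum_range_succ]

theorem one_neg_one_dotProduct_xseq_odd (m : ℕ) :
    ![(1 : ℝ), -1] ⬝ᵥ xseq (2 * m + 1) = ![(1 : ℝ), -1] ⬝ᵥ xseq (2 * m) := by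
  rcases m with _ | m
  · norm_num [xseq]
  · have displacement : ![(1 : ℝ), -1] ⬝ᵥ ![(1 / 2) ^ (2 * m), (-(1 / 2)) ^ (2 * m)] = 0 := by
      simp [(even_two_mul m).neg_pow]
    rw [mul_add_one, xseq_add_three, dotProduct_add, displacement, add_zero]

theorem one_one_dotProduct_xseq_even (m : ℕ) :
    ![(1 : ℝ), 1] ⬝ᵥ xseq (2 * m + 2) = ![(1 : ℝ), 1] ⬝ᵥ xseq (2 * m + 1) := by
  rcases m with _ | m
  · norm_num [xseq]
  · have displacement :
        ![(1 : ℝ), 1] ⬝ᵥ ![(1 / 2) ^ (2 * m + 1), (-(1 / 2)) ^ (2 * m + 1)] = 0 := by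
      simp [(odd_two_mul_add_one m).neg_pow]
    rw [show 2 * (m + 1) + 2 = 2 * m + 1 + 3 by ring, xseq_add_three, dotProduct_add, displacement,
      add_zero, show 2 * (m + 1) + 1 = 2 * m + 1 + 2 by ring]

theorem f0_not_mem_Rb_general {c : ℕ → ℝ} (hnonneg : ∀ m, 0 ≤ c (m + 1))
    (hdiv : ¬ Summable fun m => c (m + 1)) {f0 : (Fin 2 → ℝ) → ℝ}
    (hf0even : ∀ m, f0 (xseq (2 * m)) = 0) (hf0odd : ∀ m, f0 (xseq (2 * m + 1)) = c (m + 1))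
    {g₁ g₂ : ℝ → ℝ}
    (hf0 : ∀ x ∈ range xseq, f0 x = g₁ (![(1 : ℝ), -1] ⬝ᵥ x) + g₂ (![(1 : ℝ), 1] ⬝ᵥ x)) :
    ¬ BddOn (fun x => g₁ (![(1 : ℝ), -1] ⬝ᵥ x)) (range xseq) ∧
      ¬ BddOn (fun x => g₂ (![(1 : ℝ), 1] ⬝ᵥ x)) (range xseq) := by
  rw [forall_mem_range] at hf0
  have not_bounded_even (M : ℝ) : ¬ ∀ m, |g₂ (![(1 : ℝ), 1] ⬝ᵥ xseq (2 * m))| ≤ M := by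
    intro hM
    refine hdiv ?_
    simpa only [hf0odd, hf0even, sub_zero] using
      summable_odd_sub_even_of_abs_le one_neg_one_dotProduct_xseq_odd
        one_one_dotProduct_xseq_even hf0 (by simpa only [hf0odd, hf0even] using hnonneg) hM
  have abs_eq_even (m : ℕ) : |g₂ (![(1 : ℝ), 1] ⬝ᵥ xseq (2 * m))| =
      |g₁ (![(1 : ℝ), -1] ⬝ᵥ xseq (2 * m))| := by
    rw [eq_neg_of_add_eq_zero_right ((hf0 _).symm.trans (hf0even m)), abs_neg]
  constructor
  · rintro ⟨M, hM⟩
    exact not_bounded_even M fun m => (abs_eq_even m).trans_le (hM _ (mem_range_self _))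
  · rintro ⟨M, hM⟩
    exact not_bounded_even M fun m => hM _ (mem_range_self _)

/-- for a sequence `cₙ > 0` with `cₙ → 0` and `∑ cₙ = ∞`, the
function `f₀` with `f₀(x^{2n}) = 0`, `f₀(x^{2n+1}) = c_{n+1}` admits no
representation `g₁(a¹·x) + g₂(a²·x)` on `X` with both summands bounded on `X`;
in particular `f₀ ∉ R_b(X)`. -/
theorem f0_not_mem_Rb
    (c : ℕ → ℝ) (hpos : ∀ m : ℕ, 1 ≤ m → 0 < c m)
    (hlim : Filter.Tendsto c Filter.atTop (nhds 0))
    (hdiv : ¬ Summable fun m => c (m + 1))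
    (f0 : (Fin 2 → ℝ) → ℝ)
    (hf0even : ∀ m : ℕ, f0 (xseq (2 * m)) = 0)
    (hf0odd : ∀ m : ℕ, f0 (xseq (2 * m + 1)) = c (m + 1)) :
    f0 ∉ RbSet ![(1 : ℝ), -1] ![(1 : ℝ), 1] (Set.range xseq) := by
  rintro ⟨g₁, g₂, hf0, -, hg₂⟩
  exact (f0_not_mem_Rb_general (fun m => (hpos _ m.succ_pos).le) hdiv hf0even hf0odd hf0).2 hg₂
end

section
/- Let a¹ = (1, −1), a² = (1, 1) in ℝ², let X = {x⁰, x¹, x², ...} ⊂ ℝ² where x⁰ = (2, 2/3), x¹ = (2/3, −2/3), x² = (0, 0), and x^{3+k} = (Σ_{j=0}^{k} 2^{−j}, Σ_{j=0}^{k} (−1)^j 2^{−j}) for k = 0, 1, 2, .... Then there exists a continuous function f₀ ∈ B(X) having no extremal element in R_b(X); consequently, R_b(X) is not proximinal in B(X). -/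
open Matrix Set Filter Topology

/-!
The segments joining consecutive points `xⁿ` are alternately perpendicular to `a¹` and `a²`, and
the path never returns to a level line it has left. On such a path a function is a sum of bounded
ridge functions iff its values have the form `uₙ + uₙ₊₁` with `u` bounded, which by telescoping
means that their alternating partial sums are bounded. A function tending to `0` along the path is
a uniform limit of functions with finitely many nonzero values, so its distance to `R_b` is `0`; if
its alternating sums are unbounded, it is not in `R_b`, and the distance is not attained. Since
`xⁿ → x⁰` and the second coordinate of `x³⁺ᵏ - x⁰` is `(-1/2)ᵏ / 3`, a continuous function of that
coordinate vanishing like the inverse of a logarithm has alternating sums growing like the harmonic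
series.
-/

/-- The alternating partial sums `∑_{i < n} (-1)ⁱ vᵢ`, the (unnormalised) path functionals whose
boundedness characterises `R_b` on an infinite path. -/
def altSum {R : Type*} [Ring R] (v : ℕ → R) (n : ℕ) : R :=
  ∑ i ∈ Finset.range n, (-1) ^ i * v i

lemma altSum_succ {R : Type*} [Ring R] (v : ℕ → R) (n : ℕ) :
    altSum v (n + 1) = altSum v n + (-1) ^ n * v n :=
  Finset.sum_range_succ _ _

lemma altSum_of_eq_add {R : Type*} [Ring R] {u v : ℕ → R} (h : ∀ n, v n = u n + u (n + 1))
    (n : ℕ) : altSum v n = u 0 - (-1) ^ n * u n := by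
  induction n with
  | zero => simp [altSum]
  | succ n ih => rw [altSum_succ, ih, h, pow_succ]; noncomm_ring

lemma isBounded_range_altSum_iff {v : ℕ → ℝ} :
    Bornology.IsBounded (range (altSum v)) ↔
      ∃ u : ℕ → ℝ, Bornology.IsBounded (range u) ∧ ∀ n, v n = u n + u (n + 1) := by
  simp only [isBounded_iff_forall_norm_le, forall_mem_range, Real.norm_eq_abs]
  constructor
  · rintro ⟨C, hC⟩
    refine ⟨fun n ↦ (-1) ^ (n + 1) * altSum v n, ⟨C, fun n ↦ ?_⟩, fun n ↦ ?_⟩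
    · simpa only [abs_mul, abs_neg_one_pow, one_mul] using hC n
    · have hsq : ((-1 : ℝ) ^ n) * (-1) ^ n = 1 := by rw [← mul_pow]; norm_num
      dsimp only
      rw [altSum_succ]
      linear_combination (-v n) * hsq
  · rintro ⟨u, ⟨C, hC⟩, huv⟩
    refine ⟨C + C, fun n ↦ ?_⟩
    calc |altSum v n| = |u 0 - (-1) ^ n * u n| := by rw [altSum_of_eq_add huv]
      _ ≤ |u 0| + |(-1) ^ n * u n| := abs_sub _ _
      _ = |u 0| + |u n| := by rw [abs_mul, abs_neg_one_pow, one_mul]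
      _ ≤ C + C := add_le_add (hC 0) (hC n)

lemma isBounded_range_altSum_of_eventually_eq_zero {R : Type*} [SeminormedRing R] {v : ℕ → R}
    (hv : ∀ᶠ n in atTop, v n = 0) : Bornology.IsBounded (range (altSum v)) := by
  obtain ⟨N, hN⟩ := eventually_atTop.1 hv
  refine Metric.isBounded_range_of_tendsto _ (tendsto_atTop_of_eventually_const (i₀ := N)
    (x := altSum v N) fun n hn ↦ ?_)
  exact Finset.eventually_constant_sum (fun i hi ↦ by rw [hN i hi, mul_zero]) hn

section Approximation

variable {n : ℕ} {a1 a2 : Fin n → ℝ} {X : Set (Fin n → ℝ)} {f g : (Fin n → ℝ) → ℝ}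

lemma BddOn.sub (hf : BddOn f X) (hg : BddOn g X) : BddOn (fun x ↦ f x - g x) X := by
  obtain ⟨C, hC⟩ := hf
  obtain ⟨D, hD⟩ := hg
  exact ⟨C + D, fun x hx ↦ (abs_sub _ _).trans (add_le_add (hC x hx) (hD x hx))⟩

lemma bddOn_of_mem_RbSet (hf : f ∈ RbSet a1 a2 X) : BddOn f X := by
  obtain ⟨g1, g2, hfg, ⟨C, hC⟩, ⟨D, hD⟩⟩ := hf
  refine ⟨C + D, fun x hx ↦ ?_⟩
  rw [hfg x hx]
  exact (abs_add_le _ _).trans (add_le_add (hC x hx) (hD x hx))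

lemma mem_RbSet_of_eqOn (hfg : EqOn f g X) (hg : g ∈ RbSet a1 a2 X) : f ∈ RbSet a1 a2 X := by
  obtain ⟨g1, g2, hg, hg1, hg2⟩ := hg
  exact ⟨g1, g2, fun x hx ↦ (hfg hx).trans (hg x hx), hg1, hg2⟩

lemma supDist_nonneg : 0 ≤ supDist X f g := by
  apply Real.sSup_nonneg
  rintro _ ⟨x, _, rfl⟩
  exact abs_nonneg _

lemma supDist_le {ε : ℝ} (hε : 0 ≤ ε) (h : ∀ x ∈ X, |f x - g x| ≤ ε) : supDist X f g ≤ ε := by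
  refine Real.sSup_le ?_ hε
  rintro _ ⟨x, hx, rfl⟩
  exact h x hx

lemma abs_sub_le_supDist (hfg : BddOn (fun x ↦ f x - g x) X) {x : Fin n → ℝ} (hx : x ∈ X) :
    |f x - g x| ≤ supDist X f g := by
  obtain ⟨C, hC⟩ := hfg
  refine le_csSup ⟨C, ?_⟩ ⟨x, hx, rfl⟩
  rintro _ ⟨y, hy, rfl⟩
  exact hC y hy

lemma eqOn_of_supDist_nonpos (hfg : BddOn (fun x ↦ f x - g x) X) (h : supDist X f g ≤ 0) :
    EqOn f g X := fun _ hx ↦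
  sub_eq_zero.1 (abs_nonpos_iff.1 ((abs_sub_le_supDist hfg hx).trans h))

lemma HasExtremalIn.exists_supDist_nonpos {S : Set ((Fin n → ℝ) → ℝ)} (h : HasExtremalIn X f S)
    (happrox : ∀ ε > 0, ∃ g ∈ S, supDist X f g ≤ ε) : ∃ g ∈ S, supDist X f g ≤ 0 := by
  obtain ⟨g, hg, hmin⟩ := h
  refine ⟨g, hg, le_of_forall_pos_le_add fun ε hε ↦ ?_⟩
  obtain ⟨q, hq, hqε⟩ := happrox ε hε
  have hbdd : BddBelow (supDist X f '' S) := ⟨0, forall_mem_image.2 fun _ _ ↦ supDist_nonneg⟩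
  calc supDist X f g = sInf (supDist X f '' S) := hmin
    _ ≤ supDist X f q := csInf_le hbdd (mem_image_of_mem _ hq)
    _ ≤ 0 + ε := by rwa [zero_add]

lemma HasExtremalIn.mem_RbSet (h : HasExtremalIn X f (RbSet a1 a2 X)) (hf : BddOn f X)
    (happrox : ∀ ε > 0, ∃ g ∈ RbSet a1 a2 X, supDist X f g ≤ ε) : f ∈ RbSet a1 a2 X := by
  obtain ⟨g, hg, hle⟩ := h.exists_supDist_nonpos happrox
  exact mem_RbSet_of_eqOn (eqOn_of_supDist_nonpos (hf.sub (bddOn_of_mem_RbSet hg)) hle) hg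

end Approximation

/-- `p` is an infinite path, described by the values of the two linear forms along it: `s j` is the
value of `a1` at `p (2j)` and `p (2j+1)`, and `t j` that of `a2` at `p (2j-1)` and `p (2j)`. Unlike
in `IsInfPathFrom`, consecutive points may coincide; injectivity of `s` and `t` says that the path
never returns to a level line it has left. -/
structure IsZigzag {n : ℕ} (a1 a2 : Fin n → ℝ) (s t : ℕ → ℝ) (p : ℕ → Fin n → ℝ) : Prop where
  dotProduct_fst : ∀ k, a1 ⬝ᵥ p k = s (k / 2)
  dotProduct_snd : ∀ k, a2 ⬝ᵥ p k = t ((k + 1) / 2)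

namespace IsZigzag

variable {n : ℕ} {a1 a2 : Fin n → ℝ} {s t : ℕ → ℝ} {p : ℕ → Fin n → ℝ} {f : (Fin n → ℝ) → ℝ}

lemma injective (hp : IsZigzag a1 a2 s t p) (hs : s.Injective) (ht : t.Injective) :
    p.Injective := fun k l hkl ↦ by
  have h1 : k / 2 = l / 2 := hs <| by rw [← hp.dotProduct_fst, ← hp.dotProduct_fst, hkl]
  have h2 : (k + 1) / 2 = (l + 1) / 2 :=
    ht <| by rw [← hp.dotProduct_snd, ← hp.dotProduct_snd, hkl]
  omega

lemma exists_eq_add_of_mem_RbSet (hp : IsZigzag a1 a2 s t p) {X : Set (Fin n → ℝ)}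
    (hpX : ∀ k, p k ∈ X) (hf : f ∈ RbSet a1 a2 X) :
    ∃ u : ℕ → ℝ, Bornology.IsBounded (range u) ∧ ∀ k, f (p k) = u k + u (k + 1) := by
  obtain ⟨g1, g2, hfg, ⟨C, hC⟩, ⟨D, hD⟩⟩ := hf
  refine ⟨fun k ↦ if Even k then g2 (a2 ⬝ᵥ p k) else g1 (a1 ⬝ᵥ p k), ?_, fun k ↦ ?_⟩
  · rw [isBounded_iff_forall_norm_le]
    refine ⟨max C D, forall_mem_range.2 fun k ↦ ?_⟩
    split_ifs
    · exact (hD _ (hpX k)).trans (le_max_right C D)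
    · exact (hC _ (hpX k)).trans (le_max_left C D)
  · rw [hfg _ (hpX k)]
    obtain hk | hk := Nat.even_or_odd k
    · have hstep : a1 ⬝ᵥ p (k + 1) = a1 ⬝ᵥ p k := by
        rw [hp.dotProduct_fst, hp.dotProduct_fst, Nat.succ_div_of_not_dvd (by grind)]
      simp only [hk, Nat.not_even_iff_odd.2 hk.add_one, if_true, if_false, hstep, add_comm]
    · have hstep : a2 ⬝ᵥ p (k + 1) = a2 ⬝ᵥ p k := by
        rw [hp.dotProduct_snd, hp.dotProduct_snd, Nat.succ_div_of_not_dvd (by grind)]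
      simp only [Nat.not_even_iff_odd.2 hk, hk.add_one, if_true, if_false, hstep]

lemma mem_RbSet_range_of_eq_add (hp : IsZigzag a1 a2 s t p) (hs : s.Injective) (ht : t.Injective)
    {u : ℕ → ℝ} (hu : Bornology.IsBounded (range u)) (hfu : ∀ k, f (p k) = u k + u (k + 1)) :
    f ∈ RbSet a1 a2 (range p) := by
  obtain ⟨C, hC⟩ := isBounded_iff_forall_norm_le.1 hu
  rw [forall_mem_range] at hC
  let g1 : ℝ → ℝ := Function.extend s (fun j ↦ u (2 * j + 1)) 0
  let g2 : ℝ → ℝ := Function.extend t (fun j ↦ u (2 * j)) 0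
  have hg1 (k : ℕ) : g1 (a1 ⬝ᵥ p k) = u (2 * (k / 2) + 1) := by
    rw [hp.dotProduct_fst]; exact hs.extend_apply _ _ _
  have hg2 (k : ℕ) : g2 (a2 ⬝ᵥ p k) = u (2 * ((k + 1) / 2)) := by
    rw [hp.dotProduct_snd]; exact ht.extend_apply _ _ _
  refine ⟨g1, g2, forall_mem_range.2 fun k ↦ ?_, ⟨C, forall_mem_range.2 fun k ↦ ?_⟩,
    ⟨C, forall_mem_range.2 fun k ↦ ?_⟩⟩
  · rw [hfu, hg1, hg2]
    obtain hk | hk := Nat.even_or_odd k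
    · rw [show 2 * (k / 2) + 1 = k + 1 by grind, show 2 * ((k + 1) / 2) = k by grind, add_comm]
    · rw [show 2 * (k / 2) + 1 = k by grind, show 2 * ((k + 1) / 2) = k + 1 by grind]
  · exact (congrArg abs (hg1 k)).trans_le (hC _)
  · exact (congrArg abs (hg2 k)).trans_le (hC _)

lemma mem_RbSet_range_iff (hp : IsZigzag a1 a2 s t p) (hs : s.Injective) (ht : t.Injective) :
    f ∈ RbSet a1 a2 (range p) ↔ Bornology.IsBounded (range (altSum (f ∘ p))) := by
  rw [isBounded_range_altSum_iff]
  exact ⟨hp.exists_eq_add_of_mem_RbSet mem_range_self,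
    fun ⟨_, hu, hfu⟩ ↦ hp.mem_RbSet_range_of_eq_add hs ht hu hfu⟩

lemma exists_mem_RbSet_supDist_le (hp : IsZigzag a1 a2 s t p) (hs : s.Injective)
    (ht : t.Injective) (hf : Tendsto (f ∘ p) atTop (𝓝 0)) {ε : ℝ} (hε : 0 < ε) :
    ∃ g ∈ RbSet a1 a2 (range p), supDist (range p) f g ≤ ε := by
  obtain ⟨N, hN⟩ := Metric.tendsto_atTop.1 hf ε hε
  have hmem (k : ℕ) : p k ∈ p '' Iio N ↔ k < N := (hp.injective hs ht).mem_set_image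
  refine ⟨(p '' Iio N).indicator f, (hp.mem_RbSet_range_iff hs ht).2 ?_,
    supDist_le hε.le (forall_mem_range.2 fun k ↦ ?_)⟩
  · refine isBounded_range_altSum_of_eventually_eq_zero (eventually_atTop.2 ⟨N, fun k hk ↦ ?_⟩)
    exact indicator_of_notMem (fun h ↦ hk.not_gt ((hmem k).1 h)) f
  · obtain hk | hk := lt_or_ge k N
    · rw [indicator_of_mem ((hmem k).2 hk), sub_self, abs_zero]
      exact hε.le
    · rw [indicator_of_notMem (fun h ↦ hk.not_gt ((hmem k).1 h))]
      exact (hN k hk).le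

theorem not_hasExtremalIn_RbSet (hp : IsZigzag a1 a2 s t p) (hs : s.Injective) (ht : t.Injective)
    (hf : Tendsto (f ∘ p) atTop (𝓝 0))
    (hdiv : ¬ Bornology.IsBounded (range (altSum (f ∘ p)))) :
    ¬ HasExtremalIn (range p) f (RbSet a1 a2 (range p)) := by
  intro h
  obtain ⟨C, hC⟩ := isBounded_iff_forall_norm_le.1 (Metric.isBounded_range_of_tendsto _ hf)
  have hbdd : BddOn f (range p) := ⟨C, forall_mem_range.2 (forall_mem_range.1 hC)⟩
  exact hdiv <| (hp.mem_RbSet_range_iff hs ht).1 <|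
    h.mem_RbSet hbdd fun ε hε ↦ hp.exists_mem_RbSet_supDist_le hs ht hf hε

end IsZigzag

/-- The value of `a¹` at the points `x²ʲ` and `x²ʲ⁺¹`; that of `a²` at `x²ʲ⁻¹` and `x²ʲ` is twice
as large. The term `j = 0` is the limit of the sequence, because `xⁿ → x⁰`. -/
noncomputable def xseqLevel : ℕ → ℝ
  | 0 => 4 / 3
  | j + 1 => 4 / 3 - 4 / 3 * (1 / 4) ^ j

lemma xseqLevel_injective : xseqLevel.Injective := by
  have hpos (j : ℕ) : (0 : ℝ) < (1 / 4) ^ j := by positivity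
  rintro (_ | i) (_ | j) h
  · rfl
  · simp only [xseqLevel] at h; linarith [hpos j]
  · simp only [xseqLevel] at h; linarith [hpos i]
  · have hpow : (1 / 4 : ℝ) ^ i = (1 / 4) ^ j := by simp only [xseqLevel] at h; linarith
    rw [pow_right_injective₀ (by norm_num) (by norm_num) hpow]

lemma xseq_add_three_zero (k : ℕ) : xseq (k + 3) 0 = 2 - (1 / 2) ^ k := by
  simp only [xseq, cons_val_zero]
  rw [geom_sum_eq (by norm_num)]
  ring

lemma xseq_add_three_one (k : ℕ) : xseq (k + 3) 1 = 2 / 3 + 1 / 3 * (-(1 / 2)) ^ k := by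
  simp only [xseq, cons_val_one, cons_val_fin_one]
  rw [geom_sum_eq (by norm_num)]
  ring

lemma one_half_pow_two_mul (j : ℕ) : (1 / 2 : ℝ) ^ (2 * j) = (1 / 4) ^ j := by
  rw [pow_mul]; norm_num

lemma isZigzag_xseq :
    IsZigzag ![(1 : ℝ), -1] ![(1 : ℝ), 1] xseqLevel (fun j ↦ 2 * xseqLevel j) xseq where
  dotProduct_fst
    | 0 | 1 | 2 => by norm_num [xseq, xseqLevel]
    | k + 3 => by
      obtain ⟨j, rfl | rfl⟩ := k.even_or_odd' <;>
        simp only [vec2_dotProduct, cons_val_zero, cons_val_one, cons_val_fin_one,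
          xseq_add_three_zero, xseq_add_three_one]
      · rw [show (2 * j + 3) / 2 = j + 1 by lia, (even_two_mul j).neg_pow, one_half_pow_two_mul,
          xseqLevel]
        ring
      · rw [show (2 * j + 1 + 3) / 2 = j + 1 + 1 by lia, pow_succ, pow_succ,
          (even_two_mul j).neg_pow, one_half_pow_two_mul, xseqLevel]
        ring
  dotProduct_snd
    | 0 | 1 | 2 => by norm_num [xseq, xseqLevel]
    | k + 3 => by
      obtain ⟨j, rfl | rfl⟩ := k.even_or_odd' <;>
        simp only [vec2_dotProduct, cons_val_zero, cons_val_one, cons_val_fin_one,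
          xseq_add_three_zero, xseq_add_three_one]
      · rw [show (2 * j + 3 + 1) / 2 = j + 1 + 1 by lia, (even_two_mul j).neg_pow,
          one_half_pow_two_mul, xseqLevel]
        ring
      · rw [show (2 * j + 1 + 3 + 1) / 2 = j + 1 + 1 by lia, pow_succ, pow_succ,
          (even_two_mul j).neg_pow, one_half_pow_two_mul, xseqLevel]
        ring

/-- An odd continuous function vanishing at `0` more slowly than any power. The logarithm is taken
to base `2` so that the value at `2⁻ᵏ` is `1 / (k + 1)`; at `s = 0`, where `Real.logb 2 0` is the
junk value `0`, the sign makes it `0`. -/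
noncomputable def signDivLog (s : ℝ) : ℝ :=
  SignType.sign s / (1 + |Real.logb 2 s|)

lemma abs_signDivLog_le (s : ℝ) : |signDivLog s| ≤ (1 + |Real.logb 2 s|)⁻¹ := by
  have hsign : |((SignType.sign s : SignType) : ℝ)| ≤ 1 := by cases SignType.sign s <;> simp
  have hpos : 0 < 1 + |Real.logb 2 s| := by positivity
  rw [signDivLog, abs_div, abs_of_pos hpos, div_eq_mul_inv]
  exact mul_le_of_le_one_left (inv_nonneg.2 hpos.le) hsign

lemma abs_signDivLog_le_one (s : ℝ) : |signDivLog s| ≤ 1 :=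
  (abs_signDivLog_le s).trans (inv_le_one_of_one_le₀ (le_add_of_nonneg_right (abs_nonneg _)))

lemma signDivLog_zero : signDivLog 0 = 0 := by
  simp [signDivLog]

lemma signDivLog_neg (s : ℝ) : signDivLog (-s) = -signDivLog s := by
  simp [signDivLog, Left.sign_neg, neg_div, Real.logb_neg_eq_logb]

lemma signDivLog_neg_one_half_pow (k : ℕ) :
    signDivLog ((-(1 / 2)) ^ k) = (-1) ^ k * (1 / (k + 1)) := by
  have hlog : Real.logb 2 ((-(1 / 2)) ^ k) = -k := by
    rw [Real.logb_pow, Real.logb_neg_eq_logb, one_div, Real.logb_inv,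
      Real.logb_self_eq_one one_lt_two]
    ring
  have hsign : ((SignType.sign ((-(1 / 2) : ℝ) ^ k) : SignType) : ℝ) = (-1) ^ k := by
    rw [sign_pow, sign_neg (by norm_num)]; simp
  rw [signDivLog, hlog, hsign, abs_neg, Nat.abs_cast]
  ring

lemma continuous_signDivLog : Continuous signDivLog := by
  refine continuous_iff_continuousAt.2 fun s ↦ ?_
  obtain rfl | hs := eq_or_ne s 0
  · rw [continuousAt_iff_punctured_nhds, signDivLog_zero]
    have hlog : Tendsto (fun s ↦ 1 + |Real.logb 2 s|) (𝓝[≠] 0) atTop :=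
      tendsto_atTop_add_const_left _ _ <| tendsto_abs_atBot_atTop.comp
        (Real.tendsto_logb_nhdsNE_zero one_lt_two)
    exact squeeze_zero_norm abs_signDivLog_le hlog.inv_tendsto_atTop
  · have hsign : ContinuousAt (fun s : ℝ ↦ ((SignType.sign s : SignType) : ℝ)) s :=
      (continuous_of_discreteTopology (f := ((↑) : SignType → ℝ))).continuousAt.comp
        (continuousAt_sign_of_ne_zero hs)
    exact hsign.div (continuousAt_const.add (Real.continuousAt_logb hs).abs) (by positivity)

/-- The function `f₀` of the theorem, normalised so that it vanishes at `x⁰ = lim xⁿ` and all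
terms of its alternating sums from `n = 3` on are positive. -/
noncomputable def xseqTarget (x : Fin 2 → ℝ) : ℝ :=
  signDivLog (2 - 3 * x 1)

lemma continuous_xseqTarget : Continuous xseqTarget :=
  continuous_signDivLog.comp (by fun_prop)

lemma xseqTarget_xseq_add_three (k : ℕ) :
    xseqTarget (xseq (k + 3)) = (-1) ^ (k + 3) * (1 / (k + 1)) := by
  rw [xseqTarget, xseq_add_three_one, show 2 - 3 * (2 / 3 + 1 / 3 * (-(1 / 2)) ^ k) =
    -(-(1 / 2) : ℝ) ^ k by ring, signDivLog_neg, signDivLog_neg_one_half_pow]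
  ring

lemma tendsto_xseqTarget_xseq : Tendsto (xseqTarget ∘ xseq) atTop (𝓝 0) := by
  rw [← tendsto_add_atTop_iff_nat 3]
  refine squeeze_zero_norm (fun k ↦ le_of_eq ?_) tendsto_one_div_add_atTop_nhds_zero_nat
  rw [Function.comp_apply, xseqTarget_xseq_add_three, Real.norm_eq_abs, abs_mul, abs_neg_one_pow,
    one_mul, abs_of_nonneg (by positivity)]

lemma altSum_xseqTarget_xseq_add_three (n : ℕ) :
    altSum (xseqTarget ∘ xseq) (n + 3) =
      altSum (xseqTarget ∘ xseq) 3 + ∑ k ∈ Finset.range n, 1 / ((k : ℝ) + 1) := by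
  rw [altSum, add_comm n 3, Finset.sum_range_add, altSum]
  congr 1
  refine Finset.sum_congr rfl fun k _ ↦ ?_
  rw [Function.comp_apply, add_comm 3 k, xseqTarget_xseq_add_three, ← mul_assoc, ← mul_pow]
  norm_num

lemma tendsto_altSum_xseqTarget_xseq : Tendsto (altSum (xseqTarget ∘ xseq)) atTop atTop := by
  rw [← tendsto_add_atTop_iff_nat 3]
  exact (tendsto_atTop_add_const_left _ _ Real.tendsto_sum_range_one_div_nat_succ_atTop).congr
    fun n ↦ (altSum_xseqTarget_xseq_add_three n).symm

/-- on `X = {x⁰, x¹, …}` there exists a continuous bounded function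
`f₀` having no extremal element in `R_b(X)`; consequently `R_b(X)` is not proximinal
in `B(X)`. -/
theorem Rb_not_proximinal_on_xseq :
    ∃ f0 : (Fin 2 → ℝ) → ℝ,
      ContinuousOn f0 (Set.range xseq) ∧ BddOn f0 (Set.range xseq) ∧
      ¬ HasExtremalIn (Set.range xseq) f0
          (RbSet ![(1 : ℝ), -1] ![(1 : ℝ), 1] (Set.range xseq)) := by
  refine ⟨xseqTarget, continuous_xseqTarget.continuousOn, ⟨1, fun _ _ ↦ abs_signDivLog_le_one _⟩,
    isZigzag_xseq.not_hasExtremalIn_RbSet xseqLevel_injective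
      ((mul_right_injective₀ two_ne_zero).comp xseqLevel_injective) tendsto_xseqTarget_xseq ?_⟩
  exact fun hbdd ↦ not_bddAbove_of_tendsto_atTop tendsto_altSum_xseqTarget_xseq hbdd.bddAbove
end
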